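/- Dissipativity of the transport operator (Corollary of Section 5): suppose b ∈ H satisfies ⟨b, ∂φ⟩_H ≥ 0 for every φ ∈ 𝒞_B with φ(x) ≥ 0 for all x ∈ X; let H₀ be a real Hilbert space, j : 𝒞 → H₀ an injective linear map with j(𝒞_B) dense in H₀, and U : H₀ → H a surjective linear isometry with U(j f) = f•b for all f ∈ 𝒞. Then the densely defined operator A₀ on H₀ with domain j(𝒞_B) given by A₀(j f) := −U^{-1}(∂f) is dissipative, i.e. ⟨A₀ x, x⟩_{H₀} ≤ 0 for every x ∈ j(𝒞_B). -/

import Mathlib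

open RealInnerProductSpace ContinuousMap

set_option synthInstance.maxHeartbeats 1000000
set_option maxHeartbeats 1000000

section Leibniz

variable {A E F : Type*} [Mul A]
  [SeminormedAddCommGroup E] [InnerProductSpace ℝ E]
  [SeminormedAddCommGroup F] [InnerProductSpace ℝ F]
  {act : A → E →ₗ[ℝ] E} {par : A → E}

theorem inner_apply_mul_self_of_leibniz
    (hLeibniz : ∀ f g : A, par (f * g) = act f (par g) + act g (par f))
    {f : A} (hf : (act f).IsSymmetric) (b : E) :
    ⟪b, par (f * f)⟫ = 2 * ⟪par f, act f b⟫ := by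
  rw [hLeibniz, inner_add_right, ← hf, real_inner_comm, two_mul]

theorem stmt_2_general
    (hact_symm : ∀ f : A, (act f).IsSymmetric)
    (hLeibniz : ∀ f g : A, par (f * g) = act f (par g) + act g (par f))
    {S : Set A} {b : E} (hb : ∀ f ∈ S, 0 ≤ ⟪b, par (f * f)⟫)
    {j : A → F} {U : F ≃ₗᵢ[ℝ] E} (hU : ∀ f : A, U (j f) = act f b) :
    ∀ f ∈ S, ⟪-(U.symm (par f)), j f⟫ ≤ 0 := by
  intro f hf
  have inner_symm_par : ⟪U.symm (par f), j f⟫ = ⟪par f, act f b⟫ := by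
    rw [U.symm.inner_map_eq_flip, U.symm_symm, hU]
  have inner_par_sq : ⟪b, par (f * f)⟫ = 2 * ⟪par f, act f b⟫ :=
    inner_apply_mul_self_of_leibniz hLeibniz (hact_symm f) b
  rw [inner_neg_left, inner_symm_par]
  linarith [hb f hf]

end Leibniz

/-- **Dissipativity of the transport operator**: if `b ∈ H` satisfies `⟨b, ∂φ⟩_H ≥ 0` for every
nonnegative `φ ∈ 𝒞_B`, `j : 𝒞 → H₀` is injective with `j(𝒞_B)` dense, and `U : H₀ → H` is a
surjective linear isometry with `U(j f) = f•b`, then the operator `A₀(j f) := −U⁻¹(∂f)` with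
domain `j(𝒞_B)` is dissipative: `⟨A₀ x, x⟩ ≤ 0` for `x ∈ j(𝒞_B)`. -/
theorem stmt_2
    {X : Type*} [TopologicalSpace X]
    {H : Type*} [NormedAddCommGroup H] [InnerProductSpace ℝ H] [CompleteSpace H]
    {H₀ : Type*} [NormedAddCommGroup H₀] [InnerProductSpace ℝ H₀] [CompleteSpace H₀]
    (𝒞 : Subalgebra ℝ C(X, ℝ))
    (act : 𝒞 →ₗ[ℝ] H →ₗ[ℝ] H)
    (hact_one : ∀ v : H, act 1 v = v)
    (hact_symm : ∀ (f : 𝒞) (v w : H), ⟪act f v, w⟫ = ⟪v, act f w⟫)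
    (hact_bound : ∀ (f : 𝒞) (M : ℝ), (∀ x : X, |(f : C(X, ℝ)) x| ≤ M) →
      ∀ v : H, ‖act f v‖ ≤ M * ‖v‖)
    (par : 𝒞 →ₗ[ℝ] H)
    (hLeibniz : ∀ f g : 𝒞, par (f * g) = act f (par g) + act g (par f))
    (B : Set X) (hB : IsClosed B)
    (b : H)
    (hb : ∀ φ : 𝒞, (∀ x ∈ B, (φ : C(X, ℝ)) x = 0) → (∀ x : X, 0 ≤ (φ : C(X, ℝ)) x) →
      0 ≤ ⟪b, par φ⟫)
    (j : 𝒞 →ₗ[ℝ] H₀) (hjinj : Function.Injective j)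
    (hjdense : Dense (⇑j '' {f : 𝒞 | ∀ x ∈ B, (f : C(X, ℝ)) x = 0}))
    (U : H₀ ≃ₗᵢ[ℝ] H) (hU : ∀ f : 𝒞, U (j f) = act f b) :
    ∀ f : 𝒞, (∀ x ∈ B, (f : C(X, ℝ)) x = 0) →
      ⟪-(U.symm (par f)), j f⟫ ≤ 0 := by
  refine stmt_2_general hact_symm hLeibniz (fun f hf ↦ hb (f * f) ?_ ?_) hU
  exacts [fun x hx ↦ mul_eq_zero_of_left (hf x hx) _, fun x ↦ mul_self_nonneg _]
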